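/- arXiv:2505.09174 — 2 statements merged into one kernel-verified Lean document; each statement's English description precedes it below -/
import Mathlib

section
/- Suppose the commutative diagram of topological spaces with maps f : A → Y, closed cofibration i : A ↪ X, f' : A' → Y', closed cofibration i' : A' ↪ X', and vertical homotopy equivalences φ_X : X → X', φ_A : A → A', φ_Y : Y → Y' satisfying φ_Y ∘ f = f' ∘ φ_A and φ_X ∘ i = i' ∘ φ_A. Then the induced map φ : X ∪_f Y → X' ∪_{f'} Y' on adjunction spaces is a homotopy equivalence. -/
open ContinuousMap

/-- The homotopy extension property for a map `i : A → X` with respect to all spaces. -/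
def HasHEP {A X : Type} [TopologicalSpace A] [TopologicalSpace X] (i : A → X) : Prop :=
  ∀ (Z : Type) (_ : TopologicalSpace Z) (h : C(X, Z)) (H : C(A × unitInterval, Z)),
    (∀ a, H (a, 0) = h (i a)) →
      ∃ G : C(X × unitInterval, Z), (∀ x, G (x, 0) = h x) ∧ ∀ a t, G (i a, t) = H (a, t)

/-- A closed cofibration: a closed embedding with the homotopy extension property. -/
def IsClosedCofibration {A X : Type} [TopologicalSpace A] [TopologicalSpace X]
    (i : A → X) : Prop :=
  Topology.IsClosedEmbedding i ∧ HasHEP i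

/-- The relation on `X ⊕ Y` generating the adjunction space `X ∪_f Y` along `i : A → X`,
`f : A → Y`. -/
def adjRelG {A X Y : Type} (i : A → X) (f : A → Y) : X ⊕ Y → X ⊕ Y → Prop :=
  fun p q => ∃ a : A, p = Sum.inl (i a) ∧ q = Sum.inr (f a)

/-- The adjunction space `X ∪_f Y` with the quotient topology. -/
abbrev AdjSpace {A X Y : Type} [TopologicalSpace X] [TopologicalSpace Y]
    (i : A → X) (f : A → Y) : Type := Quot (adjRelG i f)

/-- The map `X ∪_f Y → X' ∪_{f'} Y'` induced by `φ_X, φ_A, φ_Y` on a commutative diagram. -/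
def adjInducedMap {A X Y A' X' Y' : Type} [TopologicalSpace X] [TopologicalSpace Y]
    [TopologicalSpace X'] [TopologicalSpace Y']
    (i : A → X) (f : A → Y) (i' : A' → X') (f' : A' → Y')
    (φX : X → X') (φA : A → A') (φY : Y → Y')
    (hcX : ∀ a, φX (i a) = i' (φA a)) (hcY : ∀ a, φY (f a) = f' (φA a)) :
    AdjSpace i f → AdjSpace i' f' :=
  Quot.map (Sum.map φX φY)
    (by
      rintro p q ⟨a, rfl, rfl⟩
      exact ⟨φA a, by simp [Sum.map, hcX a], by simp [Sum.map, hcY a]⟩)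

/-- A continuous map is a homotopy equivalence if it has a homotopy inverse. -/
def IsHomotopyEquivMap {P Q : Type} [TopologicalSpace P] [TopologicalSpace Q]
    (g : C(P, Q)) : Prop :=
  ∃ k : C(Q, P), (k.comp g).Homotopic (ContinuousMap.id P) ∧
    (g.comp k).Homotopic (ContinuousMap.id Q)

/-!
The gluing lemma is a formal consequence of two facts about Hurewicz cofibrations.

* Every map factors as a cofibration followed by a shrinkable map, through its mapping cylinder.
* Left properness: the pushout of a homotopy equivalence along a cofibration is a homotopy
  equivalence. By the factorization it is enough to treat two cases. A cofibration which is a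
  homotopy equivalence includes a strong deformation retract, and such inclusions are stable under
  cobase change. For a shrinkable map, extending its fibrewise deformation over the cofibration
  yields an inverse of the pushed-out map.

Left properness replaces the diagram first by one with `φ_A` and `φ_Y` identities. If `f` is a
cofibration, the induced map is then the pushout of `φ_X` along a cofibration; a general `f` is
reduced to this case by factoring it.
-/

namespace GluingLemma

open CategoryTheory Limits

section Abstract

universe v u

variable {C : Type u} [Category.{v} C] {cof W : MorphismProperty C}

/-- Left properness of `W` with respect to `cof`, the model category axiom: cobase changes along
`cof` preserve `W`. -/
def IsLeftProper (cof W : MorphismProperty C) : Prop :=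
  ∀ ⦃A X : C⦄ (i : A ⟶ X), cof i → W.IsStableUnderCobaseChangeAlong i

theorem IsLeftProper.of_isPushout (hW : IsLeftProper cof W) {A X Y P : C} {i : A ⟶ X} {f : A ⟶ Y}
    {inl : X ⟶ P} {inr : Y ⟶ P} (hP : IsPushout i f inl inr) (hi : cof i) (hf : W f) : W inl :=
  (hW i hi).of_isPushout hP hf

section UnderCommonBase

variable {A X X' Y P P' : C} {i : A ⟶ X} {i' : A ⟶ X'} {f : A ⟶ Y} {inl : X ⟶ P} {inr : Y ⟶ P}
  {inl' : X' ⟶ P'} {inr' : Y ⟶ P'} {g : X ⟶ X'} {φ : P ⟶ P'}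

theorem IsLeftProper.pushoutMap_of_right_cof [cof.IsStableUnderCobaseChange]
    (hW : IsLeftProper cof W) (hP : IsPushout i f inl inr) (hP' : IsPushout i' f inl' inr')
    (hf : cof f) (hg : W g) (hgi : i ≫ g = i') (hl : inl ≫ φ = g ≫ inl') (hr : inr ≫ φ = inr') :
    W φ := by
  subst hgi hr
  exact hW.of_isPushout (hP'.of_left hl.symm hP).flip (cof.of_isPushout hP hf) hg

theorem IsLeftProper.pushoutMap_of_left [HasPushouts C] [cof.IsStableUnderCobaseChange]
    [cof.HasFactorization W] [W.HasTwoOutOfThreeProperty]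
    (hW : IsLeftProper cof W) (hP : IsPushout i f inl inr) (hP' : IsPushout i' f inl' inr')
    (hi : cof i) (hi' : cof i') (hg : W g) (hgi : i ≫ g = i') (hl : inl ≫ φ = g ≫ inl')
    (hr : inr ≫ φ = inr') : W φ := by
  obtain ⟨M, j, p, rfl, hj, hp⟩ := cof.factorizationData W f
  have hQ := IsPushout.of_hasPushout i j
  have hQ' := IsPushout.of_hasPushout i' j
  let q := hQ.desc inl (p ≫ inr) (by simpa using hP.w)
  let q' := hQ'.desc inl' (p ≫ inr') (by simpa using hP'.w)
  let ψ := hQ.desc (g ≫ pushout.inl i' j) (pushout.inr i' j) (by rw [reassoc_of% hgi, hQ'.w])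
  have hq : W q := by
    refine hW.of_isPushout (IsPushout.of_top ?_ (hQ.inr_desc _ _ _) hQ)
      (cof.of_isPushout hQ.flip hi) hp
    rwa [hQ.inl_desc]
  have hq' : W q' := by
    refine hW.of_isPushout (IsPushout.of_top ?_ (hQ'.inr_desc _ _ _) hQ')
      (cof.of_isPushout hQ'.flip hi') hp
    rwa [hQ'.inl_desc]
  have hψ : W ψ :=
    hW.pushoutMap_of_right_cof hQ hQ' hj hg hgi (hQ.inl_desc _ _ _) (hQ.inr_desc _ _ _)
  have hqφ : q ≫ φ = ψ ≫ q' := by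
    apply hQ.hom_ext
    · simp [q, q', ψ, hl]
    · simp [q, q', ψ, hr]
  exact W.of_precomp q φ hq (hqφ ▸ W.comp_mem ψ q' hψ hq')

end UnderCommonBase

theorem IsLeftProper.pushoutMap [HasPushouts C] [cof.IsStableUnderCobaseChange]
    [cof.HasFactorization W] [W.HasTwoOutOfThreeProperty] (hW : IsLeftProper cof W)
    {A X Y P A' X' Y' P' : C} {i : A ⟶ X} {f : A ⟶ Y} {inl : X ⟶ P} {inr : Y ⟶ P}
    {i' : A' ⟶ X'} {f' : A' ⟶ Y'} {inl' : X' ⟶ P'} {inr' : Y' ⟶ P'}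
    (hP : IsPushout i f inl inr) (hP' : IsPushout i' f' inl' inr') (hi : cof i) (hi' : cof i')
    {φX : X ⟶ X'} {φA : A ⟶ A'} {φY : Y ⟶ Y'} {φ : P ⟶ P'} (hφX : W φX) (hφA : W φA) (hφY : W φY)
    (hcX : i ≫ φX = φA ≫ i') (hcY : f ≫ φY = φA ≫ f')
    (hl : inl ≫ φ = φX ≫ inl') (hr : inr ≫ φ = φY ≫ inr') : W φ := by
  have hS := IsPushout.of_hasPushout i φA
  have hR := IsPushout.of_hasPushout (pushout.inr i φA) f'
  let g : pushout i φA ⟶ X' := hS.desc φX i' hcX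
  have hg : W g := W.of_precomp _ g (hW.of_isPushout hS hi hφA) (by rwa [hS.inl_desc])
  let θ := hR.desc (g ≫ inl') inr' (by rw [hS.inr_desc_assoc, hP'.w])
  have hθ : W θ :=
    hW.pushoutMap_of_left hR hP' (cof.of_isPushout hS.flip hi) hi' hg (hS.inr_desc _ _ _)
      (hR.inl_desc _ _ _) (hR.inr_desc _ _ _)
  have hPR : IsPushout i (f ≫ φY) _ _ := hcY ▸ hS.paste_vert hR
  let m := hP.desc _ (φY ≫ pushout.inr _ f') (by simpa using hPR.w)
  have hm : W m := hW.of_isPushout (hPR.of_top' hP) (cof.of_isPushout hP.flip hi) hφY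
  have hmθ : m ≫ θ = φ := by
    apply hP.hom_ext
    · simp [m, θ, g, hl]
    · simp [m, θ, hr]
  exact hmθ ▸ W.comp_mem m θ hm hθ

end Abstract

universe u

section HomotopyEquivalences

/-- Homotopy of continuous maps, as a relation on the morphisms of `TopCat`. -/
def homotopicRel : HomRel TopCat.{u} := fun _ _ f g => f.hom.Homotopic g.hom

instance : Congruence homotopicRel.{u} where
  equivalence := ⟨fun f => .refl f.hom, fun h => h.symm, fun h h' => h.trans h'⟩
  comp_left f _ _ h := h.comp (.refl f.hom)
  comp_right g h := (ContinuousMap.Homotopic.refl g.hom).comp h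

/-- The class of homotopy equivalences, encoded as the maps that become invertible in the homotopy
category so that the two-out-of-three property is inherited from isomorphisms. -/
def homotopyEquivalences : MorphismProperty TopCat.{u} :=
  (MorphismProperty.isomorphisms (Quotient homotopicRel.{u})).inverseImage
    (Quotient.functor homotopicRel)

instance : homotopyEquivalences.{u}.HasTwoOutOfThreeProperty :=
  inferInstanceAs (MorphismProperty.inverseImage _ _).HasTwoOutOfThreeProperty

theorem homotopyEquivalences_iff {X Y : TopCat.{u}} (f : X ⟶ Y) :
    homotopyEquivalences f ↔ ∃ g : Y ⟶ X,
      homotopicRel (f ≫ g) (𝟙 X) ∧ homotopicRel (g ≫ f) (𝟙 Y) := by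
  simp only [← Quotient.functor_map_eq_iff homotopicRel, Functor.map_comp]
  constructor
  · rintro ⟨γ, hl, hr⟩
    obtain ⟨g, rfl⟩ := (Quotient.functor homotopicRel).map_surjective γ
    exact ⟨g, hl, hr⟩
  · rintro ⟨g, hl, hr⟩
    exact ⟨_, hl, hr⟩

end HomotopyEquivalences

section PathSpace

variable {A X Y Z : TopCat.{u}}

/-- The space of free paths in `Z`, with the compact-open topology. Maps into it are homotopies of
maps into `Z`. -/
abbrev pathSpace (Z : TopCat.{u}) : TopCat.{u} := TopCat.of C(unitInterval, Z)

/-- Evaluation of paths at time `t`. -/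
def pathEval (Z : TopCat.{u}) (t : unitInterval) : pathSpace Z ⟶ Z :=
  TopCat.ofHom ⟨fun γ => γ t, by fun_prop⟩

/-- The adjoint of a homotopy. -/
def toPathSpace {f g : X ⟶ Z} (H : TopCat.Homotopy f g) : X ⟶ pathSpace Z :=
  TopCat.ofHom (ContinuousMap.curry ⟨fun p => H (p.2, p.1), by fun_prop⟩)

/-- The homotopy adjoint to a map into a path space. -/
def homotopyOfPathSpace (L : X ⟶ pathSpace Z) :
    TopCat.Homotopy (L ≫ pathEval Z 0) (L ≫ pathEval Z 1) where
  toFun p := (L p.2 : C(unitInterval, Z)) p.1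
  map_zero_left _ := rfl
  map_one_left _ := rfl

@[simp]
theorem homotopyOfPathSpace_apply (L : X ⟶ pathSpace Z) (p : unitInterval × X) :
    homotopyOfPathSpace L p = (L p.2 : C(unitInterval, Z)) p.1 := rfl

@[simp]
theorem toPathSpace_pathEval_zero {f g : X ⟶ Z} (H : TopCat.Homotopy f g) :
    toPathSpace H ≫ pathEval Z 0 = f := by
  ext x
  exact H.apply_zero x

@[simp]
theorem toPathSpace_pathEval_one {f g : X ⟶ Z} (H : TopCat.Homotopy f g) :
    toPathSpace H ≫ pathEval Z 1 = g := by
  ext x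
  exact H.apply_one x

theorem exists_homotopy_of_isPushout {P : TopCat.{u}} {i : A ⟶ X} {f : A ⟶ Y} {inl : X ⟶ P}
    {inr : Y ⟶ P} (hP : IsPushout i f inl inr) {w w' : P ⟶ Z}
    (H : TopCat.Homotopy (inl ≫ w) (inl ≫ w')) (K : TopCat.Homotopy (inr ≫ w) (inr ≫ w'))
    (hHK : ∀ t a, H (t, i a) = K (t, f a)) :
    ∃ G : TopCat.Homotopy w w',
      (∀ t x, G (t, inl x) = H (t, x)) ∧ ∀ t y, G (t, inr y) = K (t, y) := by
  let L := hP.desc (toPathSpace H) (toPathSpace K) (by ext a t; exact hHK t a)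
  have hl : inl ≫ L = toPathSpace H := hP.inl_desc _ _ _
  have hr : inr ≫ L = toPathSpace K := hP.inr_desc _ _ _
  have h0 : L ≫ pathEval Z 0 = w := by
    apply hP.hom_ext <;> simp [reassoc_of% hl, reassoc_of% hr]
  have h1 : L ≫ pathEval Z 1 = w' := by
    apply hP.hom_ext <;> simp [reassoc_of% hl, reassoc_of% hr]
  refine ⟨(homotopyOfPathSpace L).cast (congrArg TopCat.Hom.hom h0) (congrArg TopCat.Hom.hom h1),
    fun t x => ?_, fun t y => ?_⟩
  · exact congr($(ConcreteCategory.congr_hom hl x) t)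
  · exact congr($(ConcreteCategory.congr_hom hr y) t)

end PathSpace

section Cofibrations

variable {A X Z : TopCat.{u}} {i : A ⟶ X}

/-- Hurewicz cofibrations: the homotopy extension property for `i` against `Z` is the left lifting
property against `pathEval Z 0`. -/
def cofibrations : MorphismProperty TopCat.{u} :=
  (MorphismProperty.ofHoms fun Z : TopCat.{u} => pathEval Z 0).llp

instance : cofibrations.{u}.IsStableUnderCobaseChange :=
  MorphismProperty.llp_isStableUnderCobaseChange _

theorem cofibrations_iff (i : A ⟶ X) :
    cofibrations i ↔ ∀ ⦃Z : TopCat.{u}⦄ (h : X ⟶ Z) ⦃k : A ⟶ Z⦄ (H : TopCat.Homotopy (i ≫ h) k),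
      ∃ (h' : X ⟶ Z) (G : TopCat.Homotopy h h'), ∀ t a, G (t, i a) = H (t, a) := by
  constructor
  · intro hi Z h k H
    have sq : CommSq (toPathSpace H) i (pathEval Z 0) h := ⟨toPathSpace_pathEval_zero H⟩
    have := hi _ (MorphismProperty.ofHoms.mk Z)
    refine ⟨_, (homotopyOfPathSpace sq.lift).cast (congrArg TopCat.Hom.hom sq.fac_right) rfl,
      fun t a => ?_⟩
    exact congr($(ConcreteCategory.congr_hom sq.fac_left a) t)
  · rintro hi _ _ _ ⟨Z⟩
    refine ⟨fun {k h} sq => ?_⟩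
    obtain ⟨h', G, hG⟩ := hi h ((homotopyOfPathSpace k).cast (congrArg TopCat.Hom.hom sq.w) rfl)
    refine ⟨⟨⟨toPathSpace G, ?_, toPathSpace_pathEval_zero G⟩⟩⟩
    ext a t
    exact hG t a

theorem cofibrations_of_hasHEP {A X : TopCat.{0}} {i : A ⟶ X} (hi : HasHEP i) : cofibrations i := by
  refine (cofibrations_iff i).2 fun Z h k H => ?_
  obtain ⟨G, hG₀, hG⟩ := hi Z inferInstance h.hom ⟨fun p => H (p.2, p.1), by fun_prop⟩ H.apply_zero
  refine ⟨TopCat.ofHom ⟨fun x => G (x, 1), by fun_prop⟩,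
    { toFun := fun p => G (p.2, p.1)
      map_zero_left := hG₀
      map_one_left := fun _ => rfl }, fun t a => hG a t⟩

end Cofibrations

section StrongDeformationRetracts

variable {A X Z : TopCat.{u}} {i : A ⟶ X}

theorem homotopicRel_range_of_const {u v : X ⟶ Z} (H : TopCat.Homotopy u v) (c : A → Z)
    (hH : ∀ t a, H (t, i a) = c a) : u.hom.HomotopicRel v.hom (Set.range i) :=
  ⟨{ toHomotopy := H
     prop' := by
      rintro t _ ⟨a, rfl⟩
      exact (hH t a).trans ((hH 0 a).symm.trans (H.apply_zero _)) }⟩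

/-- The folding map `s ↦ |2s - 1|` of the unit interval, so that a path run backwards and then
forwards is the composite of the path with `unitFold`. -/
def unitFold : C(unitInterval, unitInterval) where
  toFun s := ⟨|2 * (s : ℝ) - 1|, abs_nonneg _, by
    rw [abs_le]
    constructor <;> linarith [s.2.1, s.2.2]⟩

theorem unitFold_zero : unitFold 0 = 1 := by
  ext
  simp [unitFold]

theorem unitFold_one : unitFold 1 = 1 := by
  ext
  norm_num [unitFold]

theorem symm_trans_apply_of_eq {u v w : X ⟶ Z} {K : TopCat.Homotopy u v} {H : TopCat.Homotopy u w}
    {x : X} (hKH : ∀ t, K (t, x) = H (t, x)) (s : unitInterval) :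
    K.symm.trans H (s, x) = H (unitFold s, x) := by
  rw [ContinuousMap.Homotopy.trans_apply]
  split_ifs with hs
  · rw [ContinuousMap.Homotopy.symm_apply, hKH]
    congr 2
    ext
    simp only [unitFold, unitInterval.coe_symm_eq, ContinuousMap.coe_mk]
    rw [abs_of_nonpos (by linarith)]
    ring
  · congr 2
    ext
    simp only [unitFold, ContinuousMap.coe_mk]
    rw [abs_of_nonneg (by linarith)]

/- Over `A`, the homotopy `K.symm.trans H` runs along a path and back. Extending the contraction
of this loop in the path space of `Z` to `X` gives a square, three sides of which are constant
over `A`. -/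
theorem homotopicRel_of_eq_on_range (hi : cofibrations i) {u v w : X ⟶ Z}
    (K : TopCat.Homotopy u v) (H : TopCat.Homotopy u w) (hKH : ∀ t a, K (t, i a) = H (t, i a)) :
    v.hom.HomotopicRel w.hom (Set.range i) := by
  have hH₁ : ∀ s a, H (max s 1, i a) = w (i a) := fun s a => by
    rw [max_eq_right unitInterval.le_one', H.apply_one]
  let F : TopCat.Homotopy v w := K.symm.trans H
  let Γ : TopCat.Homotopy (i ≫ toPathSpace F) (toPathSpace (.refl (i ≫ w))) :=
    { toContinuousMap := ContinuousMap.curry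
        ⟨fun p : (unitInterval × A) × unitInterval => H (max (unitFold p.2) p.1.1, i p.1.2),
          by fun_prop⟩
      map_zero_left := fun a => by
        ext s
        calc H (max (unitFold s) 0, i a) = H (unitFold s, i a) := by
              rw [max_eq_left unitInterval.nonneg']
          _ = F (s, i a) := (symm_trans_apply_of_eq (fun t => hKH t a) s).symm
      map_one_left := fun a => by
        ext s
        exact hH₁ (unitFold s) a }
  obtain ⟨L, G, hG⟩ := (cofibrations_iff i).1 hi (toPathSpace F) Γ
  have hGΓ : ∀ t a s, (G (t, i a) : C(unitInterval, Z)) s = H (max (unitFold s) t, i a) :=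
    fun t a s => congr($(hG t a) s)
  have side : ∀ s, unitFold s = 1 →
      (toPathSpace F ≫ pathEval Z s).hom.HomotopicRel (L ≫ pathEval Z s).hom (Set.range i) := by
    intro s hs
    refine homotopicRel_range_of_const
      ((ContinuousMap.Homotopy.refl (pathEval Z s).hom).comp G) (fun a => w (i a)) fun t a => ?_
    exact (hGΓ t a s).trans (by rw [hs, max_comm, hH₁])
  have top : (L ≫ pathEval Z 0).hom.HomotopicRel (L ≫ pathEval Z 1).hom (Set.range i) := by
    refine homotopicRel_range_of_const (homotopyOfPathSpace L) (fun a => w (i a)) fun s a => ?_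
    rw [homotopyOfPathSpace_apply, ← G.apply_one]
    exact (hGΓ 1 a s).trans (hH₁ _ a)
  have bottom := ((side 0 unitFold_zero).trans top).trans (side 1 unitFold_one).symm
  simpa using bottom

/-- Inclusions of strong deformation retracts. The deformation, fixed on the retract, runs from the
retraction to the identity. -/
def strongDeformationRetracts : MorphismProperty TopCat.{u} := fun A X j =>
  ∃ r : X ⟶ A, j ≫ r = 𝟙 A ∧ (r ≫ j).hom.HomotopicRel (𝟙 X : X ⟶ X).hom (Set.range j)

theorem strongDeformationRetracts_of_cofibrations {j : A ⟶ X} (hj : cofibrations j)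
    (he : homotopyEquivalences j) : strongDeformationRetracts j := by
  obtain ⟨g, ⟨D⟩, hgj⟩ := (homotopyEquivalences_iff j).1 he
  obtain ⟨r, E, hE⟩ := (cofibrations_iff j).1 hj g D
  have hjr : j ≫ r = 𝟙 A := by
    ext a
    simpa [hE] using (E.apply_one (j a)).symm
  obtain ⟨H⟩ : homotopicRel (r ≫ j) (𝟙 X) :=
    ((ContinuousMap.Homotopic.refl j.hom).comp ⟨E.symm⟩).trans hgj
  obtain ⟨e, G, hG⟩ := (cofibrations_iff j).1 hj (𝟙 X)
    ((H.compContinuousMap j.hom).cast (by rw [← TopCat.hom_comp, reassoc_of% hjr]; rfl) rfl)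
  have hje : j ≫ e = j := by
    ext a
    exact (G.apply_one (j a)).symm.trans ((hG 1 a).trans (H.apply_one (j a)))
  let K : TopCat.Homotopy (r ≫ j) (r ≫ j) :=
    (G.compContinuousMap (r ≫ j).hom).cast rfl (by rw [← TopCat.hom_comp, Category.assoc, hje])
  refine ⟨r, hjr, homotopicRel_of_eq_on_range hj K H fun t a => ?_⟩
  have : r (j a) = a := ConcreteCategory.congr_hom hjr a
  calc G (t, j (r (j a))) = G (t, j a) := by rw [this]
    _ = H (t, j a) := hG t a

theorem strongDeformationRetracts_le_homotopyEquivalences :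
    strongDeformationRetracts.{u} ≤ homotopyEquivalences := by
  rintro A X j ⟨r, hjr, hrj⟩
  exact (homotopyEquivalences_iff j).2 ⟨r, hjr ▸ .refl _, hrj.homotopic⟩

instance : strongDeformationRetracts.{u}.IsStableUnderCobaseChange where
  of_isPushout {A X Y P j f inr inl} hP := by
    rintro ⟨r, hjr, ⟨D⟩⟩
    let ρ : P ⟶ Y := hP.desc (𝟙 Y) (r ≫ f) (by rw [reassoc_of% hjr, Category.comp_id])
    have hrρ : inr ≫ ρ = 𝟙 Y := hP.inl_desc _ _ _
    have hlρ : inl ≫ ρ = r ≫ f := hP.inr_desc _ _ _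
    have hl : (r ≫ j) ≫ inl = inl ≫ ρ ≫ inr := by
      rw [Category.assoc, ← hP.w, reassoc_of% hlρ]
    obtain ⟨G, -, hG⟩ := exists_homotopy_of_isPushout hP.flip (w := ρ ≫ inr) (w' := 𝟙 P)
      (((ContinuousMap.Homotopy.refl inl.hom).comp D.toHomotopy).cast
        (congrArg TopCat.Hom.hom hl) rfl)
      ((TopCat.Homotopy.refl inr).cast (by rw [reassoc_of% hrρ]) rfl) fun t a => by
        calc inl (D (t, j a)) = inl (j a) := congrArg inl (D.eq_snd t ⟨a, rfl⟩)
          _ = inr (f a) := (ConcreteCategory.congr_hom hP.w a).symm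
    exact ⟨ρ, hrρ, homotopicRel_range_of_const G inr hG⟩

end StrongDeformationRetracts

section Shrinkable

variable {M N Y P : TopCat.{u}}

/-- Dold's shrinkable maps: those with a section onto which the source deforms within the fibres. -/
def shrinkableMaps : MorphismProperty TopCat.{u} := fun M Y p =>
  ∃ s : Y ⟶ M, s ≫ p = 𝟙 Y ∧ ∃ D : TopCat.Homotopy (𝟙 M) (p ≫ s), ∀ t m, p (D (t, m)) = p m

theorem shrinkableMaps_le_homotopyEquivalences :
    shrinkableMaps.{u} ≤ homotopyEquivalences := by
  rintro M Y p ⟨s, hsp, D, -⟩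
  exact (homotopyEquivalences_iff p).2 ⟨s, ⟨D.symm⟩, hsp ▸ .refl _⟩

theorem homotopyEquivalences_of_isPushout_shrinkableMaps {i : M ⟶ N} {p : M ⟶ Y} {inl : N ⟶ P}
    {inr : Y ⟶ P} (hP : IsPushout i p inl inr) (hi : cofibrations i) (hp : shrinkableMaps p) :
    homotopyEquivalences inl := by
  obtain ⟨s, hsp, D, hD⟩ := hp
  obtain ⟨e, G, hG⟩ := (cofibrations_iff i).1 hi (𝟙 N) (k := p ≫ s ≫ i)
    ((ContinuousMap.Homotopy.refl i.hom).comp D)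
  have hie : i ≫ e = p ≫ s ≫ i := by
    ext m
    exact (G.apply_one (i m)).symm.trans ((hG 1 m).trans (congrArg i (D.apply_one m)))
  let r : P ⟶ N := hP.desc e (s ≫ i) hie
  have hlr : inl ≫ r = e := hP.inl_desc _ _ _
  have hrr : inr ≫ r = s ≫ i := hP.inr_desc _ _ _
  have hr : inr ≫ r ≫ inl = inr := by
    rw [reassoc_of% hrr, hP.w, reassoc_of% hsp]
  obtain ⟨E, -⟩ := exists_homotopy_of_isPushout hP (w := 𝟙 P) (w' := r ≫ inl)
    (((ContinuousMap.Homotopy.refl inl.hom).comp G).cast rfl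
      (by rw [← TopCat.hom_comp, ← reassoc_of% hlr]))
    ((TopCat.Homotopy.refl inr).cast rfl (by rw [hr])) fun t m => by
      calc inl (G (t, i m)) = inl (i (D (t, m))) := congrArg inl (hG t m)
        _ = inr (p (D (t, m))) := ConcreteCategory.congr_hom hP.w _
        _ = inr (p m) := by rw [hD]
  exact (homotopyEquivalences_iff inl).2 ⟨r, hlr ▸ ⟨G.symm⟩, ⟨E.symm⟩⟩

end Shrinkable

section MappingCylinder

variable {Y Y' M Z : TopCat.{u}}

/-- The cylinder on `Y`, with the coordinates in the order used for homotopies. -/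
abbrev cylinder (Y : TopCat.{u}) : TopCat.{u} := TopCat.of (unitInterval × Y)

/-- The inclusion of `Y` in its cylinder at height `t`. -/
def cylinderIncl (Y : TopCat.{u}) (t : unitInterval) : Y ⟶ cylinder Y :=
  TopCat.ofHom ⟨fun y => (t, y), by fun_prop⟩

/-- The projection of the cylinder on `Y` to `Y`. -/
def cylinderProj (Y : TopCat.{u}) : cylinder Y ⟶ Y := TopCat.ofHom ⟨Prod.snd, by fun_prop⟩

theorem cylinderIncl_cylinderProj (Y : TopCat.{u}) (t : unitInterval) :
    cylinderIncl Y t ≫ cylinderProj Y = 𝟙 Y := rfl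

/-- A map out of a cylinder, seen as a homotopy. -/
def homotopyOfCylinder (h : cylinder Y ⟶ Z) :
    TopCat.Homotopy (cylinderIncl Y 0 ≫ h) (cylinderIncl Y 1 ≫ h) where
  toContinuousMap := h.hom
  map_zero_left _ := rfl
  map_one_left _ := rfl

/-- The deformation of a cylinder onto its end at height `1`. -/
def cylinderDeformation (Y : TopCat.{u}) :
    TopCat.Homotopy (𝟙 (cylinder Y)) (cylinderProj Y ≫ cylinderIncl Y 1) where
  toFun p := (max p.1 p.2.1, p.2.2)
  map_zero_left p := Prod.ext (max_eq_right unitInterval.nonneg') rfl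
  map_one_left p := Prod.ext (max_eq_left unitInterval.le_one') rfl

/-- A reparametrization, evaluated at `(t, s)`: for fixed `t` it runs backwards in `s` from
`(1 + t) / 2` to `0`. Composed with `K.symm.trans H`, it gives `K` at `t = 0` and `H` at `s = 0`. -/
noncomputable def cylinderStretch : C(unitInterval × unitInterval, unitInterval) where
  toFun p := ⟨(1 - p.2) * (1 + p.1) / 2, by
    have := p.1.2.1
    have := p.1.2.2
    have := p.2.2.1
    have := p.2.2.2
    constructor <;> nlinarith⟩

theorem coe_cylinderStretch (t s : unitInterval) :
    (cylinderStretch (t, s) : ℝ) = (1 - s) * (1 + t) / 2 := rfl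

theorem cylinderStretch_one_right (t : unitInterval) : cylinderStretch (t, 1) = 0 := by
  ext
  simp [coe_cylinderStretch]

theorem symm_trans_cylinderStretch_zero_left {u v w : Y ⟶ Z} (K : TopCat.Homotopy u v)
    (H : TopCat.Homotopy u w) (s : unitInterval) (y : Y) :
    K.symm.trans H (cylinderStretch (0, s), y) = K (s, y) := by
  have hs : (cylinderStretch (0, s) : ℝ) ≤ 1 / 2 := by
    rw [coe_cylinderStretch, Set.Icc.coe_zero]
    linarith [s.2.1]
  rw [ContinuousMap.Homotopy.trans_apply, dif_pos hs, ContinuousMap.Homotopy.symm_apply]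
  congr 2
  ext
  simp only [unitInterval.coe_symm_eq, coe_cylinderStretch, Set.Icc.coe_zero]
  ring

theorem symm_trans_cylinderStretch_zero_right {u v w : Y ⟶ Z} (K : TopCat.Homotopy u v)
    (H : TopCat.Homotopy u w) (t : unitInterval) (y : Y) :
    K.symm.trans H (cylinderStretch (t, 0), y) = H (t, y) := by
  rcases (unitInterval.nonneg' : 0 ≤ t).eq_or_lt with rfl | ht
  · rw [symm_trans_cylinderStretch_zero_left, K.apply_zero, H.apply_zero]
  · have ht' : ¬(cylinderStretch (t, 0) : ℝ) ≤ 1 / 2 := by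
      rw [coe_cylinderStretch, Set.Icc.coe_zero]
      have : (0 : ℝ) < t := ht
      linarith
    rw [ContinuousMap.Homotopy.trans_apply, dif_neg ht']
    congr 2
    ext
    simp only [coe_cylinderStretch, Set.Icc.coe_zero]
    ring

theorem exists_homotopy_cylinder_rel (h : cylinder Y ⟶ Z) {k : Y ⟶ Z}
    (H : TopCat.Homotopy (cylinderIncl Y 0 ≫ h) k) :
    ∃ (h' : cylinder Y ⟶ Z) (G : TopCat.Homotopy h h'),
      (∀ t y, G (t, (0, y)) = H (t, y)) ∧ ∀ t y, G (t, (1, y)) = h (1, y) := by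
  let F := (homotopyOfCylinder h).symm.trans H
  refine ⟨TopCat.ofHom ⟨fun p => F (cylinderStretch (1, p.1), p.2), by fun_prop⟩,
    { toFun := fun p => F (cylinderStretch (p.1, p.2.1), p.2.2)
      map_zero_left := fun p => symm_trans_cylinderStretch_zero_left _ H p.1 p.2
      map_one_left := fun _ => rfl },
    fun t y => symm_trans_cylinderStretch_zero_right _ H t y, fun t y => ?_⟩
  change F (cylinderStretch (t, 1), y) = h (1, y)
  rw [cylinderStretch_one_right]
  exact F.apply_zero y

theorem cofibrations_cylinderIncl_zero {f : Y ⟶ Y'} {a : cylinder Y ⟶ M} {b : Y' ⟶ M}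
    (hM : IsPushout (cylinderIncl Y 1) f a b) : cofibrations (cylinderIncl Y 0 ≫ a) := by
  refine (cofibrations_iff _).2 fun Z h k H => ?_
  obtain ⟨h', G, hG₀, hG₁⟩ := exists_homotopy_cylinder_rel (a ≫ h) H
  have hM_w : ∀ y, a (1, y) = b (f y) := ConcreteCategory.congr_hom hM.w
  have h_glue : cylinderIncl Y 1 ≫ h' = f ≫ b ≫ h := by
    ext y
    calc h' (1, y) = h (a (1, y)) := (G.apply_one _).symm.trans (hG₁ 1 y)
      _ = h (b (f y)) := by rw [hM_w]
  obtain ⟨E, hE, -⟩ := exists_homotopy_of_isPushout hM (w := h) (w' := hM.desc h' (b ≫ h) h_glue)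
    (G.cast rfl (by rw [hM.inl_desc])) ((TopCat.Homotopy.refl (b ≫ h)).cast rfl
      (by rw [hM.inr_desc])) fun t y => by
        calc G (t, (1, y)) = h (a (1, y)) := hG₁ t y
          _ = h (b (f y)) := by rw [hM_w]
  exact ⟨_, E, fun t y => (hE t (0, y)).trans (hG₀ t y)⟩

theorem shrinkableMaps_of_isPushout_cylinderIncl {f : Y ⟶ Y'} {a : cylinder Y ⟶ M} {b : Y' ⟶ M}
    (hM : IsPushout (cylinderIncl Y 1) f a b) {p : M ⟶ Y'} (hap : a ≫ p = cylinderProj Y ≫ f)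
    (hbp : b ≫ p = 𝟙 Y') : shrinkableMaps p := by
  have hapb : a ≫ p ≫ b = (cylinderProj Y ≫ cylinderIncl Y 1) ≫ a := by
    rw [reassoc_of% hap, ← hM.w, Category.assoc]
  obtain ⟨D, hDa, hDb⟩ := exists_homotopy_of_isPushout hM (w := 𝟙 M) (w' := p ≫ b)
    (((ContinuousMap.Homotopy.refl a.hom).comp (cylinderDeformation Y)).cast rfl
      (congrArg TopCat.Hom.hom hapb.symm))
    ((TopCat.Homotopy.refl b).cast rfl (by rw [reassoc_of% hbp])) fun t y => by
      calc a (max t 1, y) = a (1, y) := by rw [max_eq_right unitInterval.le_one']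
        _ = b (f y) := ConcreteCategory.congr_hom hM.w y
  have hDp : ∀ t, TopCat.ofHom (D.curry t) ≫ p = p := by
    intro t
    apply hM.hom_ext
    · ext x
      calc p (D (t, a x)) = p (a (max t x.1, x.2)) := congrArg p (hDa t x)
        _ = f x.2 := ConcreteCategory.congr_hom hap _
        _ = p (a x) := (ConcreteCategory.congr_hom hap x).symm
    · ext y
      exact congrArg p (hDb t y)
  exact ⟨b, hbp, D, fun t => ConcreteCategory.congr_hom (hDp t)⟩

instance : cofibrations.{u}.HasFactorization shrinkableMaps where
  nonempty_mapFactorizationData {Y Y'} f := by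
    have hM := IsPushout.of_hasPushout (cylinderIncl Y 1) f
    let p := hM.desc (cylinderProj Y ≫ f) (𝟙 Y')
      (by rw [reassoc_of% cylinderIncl_cylinderProj, Category.comp_id])
    have hap : pushout.inl _ _ ≫ p = cylinderProj Y ≫ f := hM.inl_desc _ _ _
    exact ⟨{
      Z := pushout (cylinderIncl Y 1) f
      i := cylinderIncl Y 0 ≫ pushout.inl _ _
      p := p
      fac := by rw [Category.assoc, hap, reassoc_of% cylinderIncl_cylinderProj]
      hi := cofibrations_cylinderIncl_zero hM
      hp := shrinkableMaps_of_isPushout_cylinderIncl hM hap (hM.inr_desc _ _ _) }⟩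

instance : cofibrations.{u}.HasFactorization homotopyEquivalences where
  nonempty_mapFactorizationData f :=
    let F := cofibrations.factorizationData shrinkableMaps f
    ⟨{ F with hp := shrinkableMaps_le_homotopyEquivalences _ F.hp }⟩

end MappingCylinder

theorem isLeftProper_homotopyEquivalences :
    IsLeftProper cofibrations.{u} homotopyEquivalences := by
  refine fun Y X i hi => ⟨fun {Y' P inr inl f} hP hf => ?_⟩
  obtain ⟨M, j, p, rfl, hj, hp⟩ := cofibrations.factorizationData shrinkableMaps f
  have hQ := IsPushout.of_hasPushout i j
  let q := hQ.desc inl (p ≫ inr) (by simpa using hP.w)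
  have hlq : pushout.inl i j ≫ q = inl := hQ.inl_desc _ _ _
  have hqP : IsPushout (pushout.inr i j) p q inr :=
    IsPushout.of_top (hlq.symm ▸ hP) (hQ.inr_desc _ _ _) hQ
  have hj' : homotopyEquivalences j :=
    homotopyEquivalences.of_postcomp j p (shrinkableMaps_le_homotopyEquivalences _ hp) hf
  have hl : homotopyEquivalences (pushout.inl i j) :=
    strongDeformationRetracts_le_homotopyEquivalences _ <|
      strongDeformationRetracts.of_isPushout hQ (strongDeformationRetracts_of_cofibrations hj hj')
  have hq : homotopyEquivalences q :=
    homotopyEquivalences_of_isPushout_shrinkableMaps hqP (cofibrations.of_isPushout hQ.flip hi) hp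
  exact hlq ▸ homotopyEquivalences.comp_mem _ _ hl hq

section AdjunctionSpace

theorem isPushout_adjSpace {A X Y : Type} [TopologicalSpace A] [TopologicalSpace X]
    [TopologicalSpace Y] (i : C(A, X)) (f : C(A, Y)) :
    IsPushout (TopCat.ofHom i) (TopCat.ofHom f)
      (TopCat.ofHom (Y := AdjSpace i f) ⟨fun x => Quot.mk _ (Sum.inl x), by fun_prop⟩)
      (TopCat.ofHom (Y := AdjSpace i f) ⟨fun y => Quot.mk _ (Sum.inr y), by fun_prop⟩) := by
  refine ⟨⟨?_⟩, ⟨PushoutCocone.IsColimit.mk _ (fun s => TopCat.ofHom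
    ⟨Quot.lift (Sum.elim s.inl s.inr) ?_, ?_⟩) (fun s => rfl) (fun s => rfl) ?_⟩⟩
  · ext a
    exact Quot.sound ⟨a, rfl, rfl⟩
  · rintro _ _ ⟨a, rfl, rfl⟩
    exact ConcreteCategory.congr_hom s.condition a
  · exact continuous_quot_lift _ (by fun_prop)
  · intro s m hl hr
    ext ⟨x | y⟩
    · exact ConcreteCategory.congr_hom hl x
    · exact ConcreteCategory.congr_hom hr y

theorem continuous_adjInducedMap {A X Y A' X' Y' : Type} [TopologicalSpace X] [TopologicalSpace Y]
    [TopologicalSpace X'] [TopologicalSpace Y'] {i : A → X} {f : A → Y} {i' : A' → X'}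
    {f' : A' → Y'} (φX : C(X, X')) (φA : A → A') (φY : C(Y, Y'))
    (hcX : ∀ a, φX (i a) = i' (φA a)) (hcY : ∀ a, φY (f a) = f' (φA a)) :
    Continuous (adjInducedMap i f i' f' φX φA φY hcX hcY) :=
  continuous_quot_lift _ (continuous_quot_mk.comp (φX.continuous.sumMap φY.continuous))

theorem isHomotopyEquivMap_iff {P Q : Type} [TopologicalSpace P] [TopologicalSpace Q]
    (g : C(P, Q)) : IsHomotopyEquivMap g ↔ homotopyEquivalences (TopCat.ofHom g) := by
  rw [homotopyEquivalences_iff]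
  exact ⟨fun ⟨k, hl, hr⟩ => ⟨TopCat.ofHom k, hl, hr⟩, fun ⟨k, hl, hr⟩ => ⟨k.hom, hl, hr⟩⟩

end AdjunctionSpace

end GluingLemma

open GluingLemma in
theorem adjInducedMap_homotopyEquiv_general {A X Y A' X' Y' : Type}
    [TopologicalSpace A] [TopologicalSpace X] [TopologicalSpace Y]
    [TopologicalSpace A'] [TopologicalSpace X'] [TopologicalSpace Y']
    (i : C(A, X)) (i' : C(A', X')) (f : C(A, Y)) (f' : C(A', Y'))
    (hi : HasHEP i) (hi' : HasHEP i') (φX : C(X, X')) (φA : C(A, A')) (φY : C(Y, Y'))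
    (hφX : IsHomotopyEquivMap φX) (hφA : IsHomotopyEquivMap φA) (hφY : IsHomotopyEquivMap φY)
    (hcX : ∀ a, φX (i a) = i' (φA a)) (hcY : ∀ a, φY (f a) = f' (φA a)) :
    ∃ φ : C(AdjSpace i f, AdjSpace i' f'),
      ⇑φ = adjInducedMap i f i' f' φX φA φY hcX hcY ∧ IsHomotopyEquivMap φ := by
  refine ⟨⟨_, continuous_adjInducedMap φX φA φY hcX hcY⟩, rfl, ?_⟩
  rw [isHomotopyEquivMap_iff] at hφX hφA hφY ⊢
  exact isLeftProper_homotopyEquivalences.pushoutMap (isPushout_adjSpace i f)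
    (isPushout_adjSpace i' f') (cofibrations_of_hasHEP hi) (cofibrations_of_hasHEP hi')
    hφX hφA hφY (by ext a; exact hcX a) (by ext a; exact hcY a) rfl rfl

/-- given a commutative diagram with closed cofibrations `i : A ↪ X`,
`i' : A' ↪ X'`, continuous maps `f : A → Y`, `f' : A' → Y'`, and vertical homotopy
equivalences `φ_X, φ_A, φ_Y`, the induced map `φ : X ∪_f Y → X' ∪_{f'} Y'` is a
homotopy equivalence. -/
theorem adjInducedMap_homotopyEquiv {A X Y A' X' Y' : Type}
    [TopologicalSpace A] [TopologicalSpace X] [TopologicalSpace Y]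
    [TopologicalSpace A'] [TopologicalSpace X'] [TopologicalSpace Y']
    (i : A → X) (i' : A' → X') (f : C(A, Y)) (f' : C(A', Y'))
    (hi : IsClosedCofibration i) (hi' : IsClosedCofibration i')
    (φX : C(X, X')) (φA : C(A, A')) (φY : C(Y, Y'))
    (hφX : IsHomotopyEquivMap φX) (hφA : IsHomotopyEquivMap φA)
    (hφY : IsHomotopyEquivMap φY)
    (hcX : ∀ a, φX (i a) = i' (φA a)) (hcY : ∀ a, φY (f a) = f' (φA a)) :
    ∃ φ : C(AdjSpace i ⇑f, AdjSpace i' ⇑f'),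
      ⇑φ = adjInducedMap i ⇑f i' ⇑f' ⇑φX ⇑φA ⇑φY hcX hcY ∧ IsHomotopyEquivMap φ :=
  adjInducedMap_homotopyEquiv_general ⟨i, hi.1.continuous⟩ ⟨i', hi'.1.continuous⟩ f f' hi.2 hi'.2
    φX φA φY hφX hφA hφY hcX hcY
end

section
/- Let K be a finite simplicial complex with vertex set V partitioned into disjoint subsets V_1, …, V_k, let 𝒦 be its geometric realization, let 𝒦̄ be the quotient space obtained by collapsing each V_j to a single point, and let 𝒦̃ = 𝒦 ∪ S be the simplicial complex obtained by attaching, for each j, a cone point z_j joined by edges to all points of V_j (so that the cones S_1, …, S_k are pairwise disjoint). Then 𝒦̄ and 𝒦̃ are homotopy equivalent. -/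
/-!
Deform `𝒦̃` through maps preserving every cone until each cone has shrunk to its apex: a
neighbourhood of each vertex `v ∈ V j` in `𝒦` is pulled along the star of `v` and then up the edge
towards `z j`, while the cone over `V j` contracts in itself. Collapsing the cones is therefore a
homotopy equivalence `𝒦̃ / S ≃ 𝒦̃`, and since `S j` meets `𝒦` exactly in `V j`, the inclusion
`𝒦 ⊆ 𝒦̃` induces a homeomorphism `𝒦̄ ≃ 𝒦̃ / S`.
-/

open Set Function Topology unitInterval Geometry
open scoped ContinuousMap

section Collapse

variable {ι X Y Z : Type*} [TopologicalSpace X] [TopologicalSpace Y] [TopologicalSpace Z]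

/-- The relation whose quotient collapses each set `A j` to a point. It is not made reflexive,
since `Quot` only depends on the equivalence relation it generates. -/
def collapseRel (A : ι → Set X) (a b : X) : Prop :=
  ∃ j, a ∈ A j ∧ b ∈ A j

theorem nonempty_homotopyEquiv_quot_of_homotopy {r : Y → Y → Prop} {f : C(Y, Y)}
    (H : (ContinuousMap.id Y).Homotopy f) (hH : ∀ t a b, r a b → r (H (t, a)) (H (t, b)))
    (hf : ∀ a b, r a b → f a = f b) : Nonempty (Quot r ≃ₕ Y) := by
  let p : C(Quot r, Y) := ⟨Quot.lift f hf, continuous_quot_lift hf f.continuous⟩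
  let π : C(Y, Quot r) := ⟨Quot.mk r, continuous_quot_mk⟩
  let G : I × Quot r → Quot r := fun a ↦
    Quot.map (fun y ↦ H (a.1, y)) (hH a.1) a.2
  have hG : Continuous G := isQuotientMap_quot_mk.continuous_lift_prod_right
    (continuous_quot_mk.comp H.continuous)
  have hG₀ (q : Quot r) : G (0, q) = q := by
    induction q using Quot.ind with
    | mk y => exact congrArg (Quot.mk r) (H.apply_zero y)
  have hG₁ (q : Quot r) : G (1, q) = π (p q) := by
    induction q using Quot.ind with
    | mk y => exact congrArg (Quot.mk r) (H.apply_one y)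
  let H' : (ContinuousMap.id (Quot r)).Homotopy (π.comp p) := ⟨⟨G, hG⟩, hG₀, hG₁⟩
  exact ⟨⟨p, π, ⟨H'.symm⟩, ⟨H.symm⟩⟩⟩

theorem exists_continuousMap_glue [Finite ι] {i : X → Y} {S : ι → Set Y} {f : X → Z}
    {g : ι → Y → Z} (hi : IsClosedEmbedding i) (hS : ∀ j, IsClosed (S j))
    (hdisj : Pairwise (Disjoint on S)) (hcov : ∀ y, y ∈ range i ∨ ∃ j, y ∈ S j)
    (hf : Continuous f) (hg : ∀ j, ContinuousOn (g j) (S j))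
    (hfg : ∀ j x, i x ∈ S j → f x = g j (i x)) :
    ∃ h : C(Y, Z), (∀ x, h (i x) = f x) ∧ ∀ j, EqOn h (g j) (S j) := by
  have hvalue (y : Y) : ∃ c, (∀ x, i x = y → c = f x) ∧ ∀ j, y ∈ S j → c = g j y := by
    rcases hcov y with ⟨x, rfl⟩ | ⟨j, hj⟩
    · exact ⟨f x, fun x' hx' ↦ congrArg f (hi.injective hx').symm, fun j hj ↦ hfg j x hj⟩
    · refine ⟨g j y, ?_, fun j' hj' ↦ ?_⟩
      · rintro x rfl
        exact (hfg j x hj).symm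
      · rw [hdisj.eq (not_disjoint_iff.2 ⟨y, hj, hj'⟩)]
  choose h hhf hhg using hvalue
  have hpre (C : Set Z) : h ⁻¹' C = i '' (f ⁻¹' C) ∪ ⋃ j, S j ∩ g j ⁻¹' C := by
    ext y
    simp only [mem_preimage, mem_union, mem_image, mem_iUnion, mem_inter_iff]
    constructor
    · intro hy
      rcases hcov y with ⟨x, rfl⟩ | ⟨j, hj⟩
      · exact .inl ⟨x, hhf _ x rfl ▸ hy, rfl⟩
      · exact .inr ⟨j, hj, hhg y j hj ▸ hy⟩
    · rintro (⟨x, hx, rfl⟩ | ⟨j, hj, hy⟩)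
      · rwa [hhf _ x rfl]
      · rwa [hhg y j hj]
  have hcont : Continuous h := by
    refine continuous_iff_isClosed.2 fun C hC ↦ ?_
    rw [hpre]
    exact (hi.isClosedMap _ (hC.preimage hf)).union
      (isClosed_iUnion_of_finite fun j ↦ (hg j).preimage_isClosed_of_isClosed (hS j) hC)
  exact ⟨⟨h, hcont⟩, fun x ↦ hhf _ x rfl, fun j y hy ↦ hhg y j hy⟩

theorem nonempty_homeomorph_quot_collapseRel [Finite ι] {i : X → Y} {A : ι → Set X}
    {S : ι → Set Y} (hi : IsClosedEmbedding i) (hS : ∀ j, IsClosed (S j))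
    (hdisj : Pairwise (Disjoint on S)) (hcov : ∀ y, y ∈ range i ∨ ∃ j, y ∈ S j)
    (hA : ∀ j, i ⁻¹' S j = A j) (hne : ∀ j, (A j).Nonempty) :
    Nonempty (Quot (collapseRel A) ≃ₜ Quot (collapseRel S)) := by
  obtain rfl : (fun j ↦ i ⁻¹' S j) = A := funext hA
  choose a ha using hne
  obtain ⟨c, hci, hcS⟩ := exists_continuousMap_glue (f := Quot.mk (collapseRel fun j ↦ i ⁻¹' S j))
    (g := fun j _ ↦ Quot.mk _ (a j)) hi hS hdisj hcov continuous_quot_mk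
    (fun _ ↦ continuousOn_const) (fun j x hx ↦ Quot.sound ⟨j, hx, ha j⟩)
  have hc : ∀ y y', collapseRel S y y' → c y = c y' := by
    rintro y y' ⟨j, hy, hy'⟩
    exact (hcS j hy).trans (hcS j hy').symm
  refine ⟨{
    toFun := Quot.map i fun _ _ ↦ id
    invFun := Quot.lift c hc
    left_inv := ?_
    right_inv := ?_
    continuous_toFun := continuous_quot_lift _ (continuous_quot_mk.comp hi.continuous)
    continuous_invFun := continuous_quot_lift hc c.continuous }⟩
  · rintro ⟨x⟩
    exact hci x
  · rintro ⟨y⟩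
    rcases hcov y with ⟨x, rfl⟩ | ⟨j, hj⟩
    · exact congrArg (Quot.map i _) (hci x)
    · exact (congrArg (Quot.map i _) (hcS j hj)).trans (Quot.sound ⟨j, ha j, hj⟩)

end Collapse

theorem exists_disjoint_bumps {X κ : Type*} [TopologicalSpace X] [T4Space X] [Finite κ]
    {p : κ → X} {U : κ → Set X} (hp : Injective p) (hU : ∀ k, IsOpen (U k))
    (hpU : ∀ k, p k ∈ U k) :
    ∃ β : κ → C(X, ℝ), (∀ k x, β k x ∈ Icc 0 1) ∧ (∀ k, β k (p k) = 1) ∧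
      (∀ k, support (β k) ⊆ U k) ∧ Pairwise (Disjoint on fun k ↦ support (β k)) := by
  obtain ⟨W, hW, hWdisj⟩ := (finite_range p).t2_separation
  have hurysohn (k : κ) : ∃ b : C(X, ℝ),
      EqOn b 0 (U k ∩ W (p k))ᶜ ∧ EqOn b 1 {p k} ∧ ∀ x, b x ∈ Icc 0 1 :=
    exists_continuous_zero_one_of_isClosed ((hU k).inter (hW (p k)).2).isClosed_compl
      isClosed_singleton (disjoint_singleton_right.2 (notMem_compl_iff.2 ⟨hpU k, (hW (p k)).1⟩))
  choose β hβ₀ hβ₁ hβI using hurysohn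
  have hsupp (k : κ) : support (β k) ⊆ U k ∩ W (p k) := fun x hx ↦
    by_contra fun h ↦ hx (hβ₀ k h)
  refine ⟨β, hβI, fun k ↦ hβ₁ k rfl, fun k ↦ (hsupp k).trans inter_subset_left, fun k l hkl ↦ ?_⟩
  exact (hWdisj (mem_range_self k) (mem_range_self l) (hp.ne hkl)).mono
    ((hsupp k).trans inter_subset_right) ((hsupp l).trans inter_subset_right)

section Polyline

variable {E : Type*} [AddCommGroup E] [Module ℝ E]

/-- The path running straight from `x` to `v` for `s ∈ [0, 1/2]` and straight from `v` to `z` for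
`s ∈ [1/2, 1]`. -/
def polyline (x v z : E) (s : ℝ) : E :=
  x + min 1 (2 * s) • (v - x) + max 0 (2 * s - 1) • (z - v)

@[simp]
theorem polyline_zero (x v z : E) : polyline x v z 0 = x := by
  simp [polyline]

@[simp]
theorem polyline_one (x v z : E) : polyline x v z 1 = z := by
  norm_num [polyline]

@[fun_prop]
theorem continuous_polyline [TopologicalSpace E] [IsTopologicalAddGroup E] [ContinuousSMul ℝ E]
    {X : Type*} [TopologicalSpace X] {x v z : X → E} {s : X → ℝ} (hx : Continuous x)
    (hv : Continuous v) (hz : Continuous z) (hs : Continuous s) :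
    Continuous fun a ↦ polyline (x a) (v a) (z a) (s a) := by
  unfold polyline
  fun_prop

theorem polyline_mem (x v z : E) {s : ℝ} (hs : s ∈ Icc (0 : ℝ) 1) :
    polyline x v z s ∈ segment ℝ x v ∪ segment ℝ v z := by
  obtain ⟨hs₀, hs₁⟩ := hs
  simp only [segment_eq_image', polyline]
  rcases le_total (2 * s) 1 with h | h
  · rw [min_eq_right h, max_eq_left (by linarith), zero_smul, add_zero]
    exact .inl ⟨2 * s, ⟨by linarith, h⟩, rfl⟩
  · rw [min_eq_left h, max_eq_right (by linarith), one_smul, add_sub_cancel]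
    exact .inr ⟨2 * s - 1, ⟨by linarith, by linarith⟩, rfl⟩

theorem polyline_self_mem (y z : E) {s : ℝ} (hs : s ∈ Icc (0 : ℝ) 1) :
    polyline y y z s ∈ segment ℝ y z := by
  have h := polyline_mem y y z hs
  rwa [segment_same, singleton_union, insert_eq_of_mem (left_mem_segment ℝ y z)] at h

theorem polyline_mem_convexJoin {A : Set E} {y z : E} (hy : y ∈ convexJoin ℝ A {z}) {s : ℝ}
    (hs : s ∈ Icc (0 : ℝ) 1) : polyline y y z s ∈ convexJoin ℝ A {z} := by
  rw [convexJoin_singleton_right, mem_iUnion₂] at hy ⊢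
  obtain ⟨v, hv, hyv⟩ := hy
  exact ⟨v, hv, (convex_segment v z).segment_subset hyv (right_mem_segment ℝ v z)
    (polyline_self_mem y z hs)⟩

end Polyline

section Complex

variable {E : Type*} [AddCommGroup E] [Module ℝ E] {K : SimplicialComplex ℝ E}

/-- The open star of `v` in `K`: the points of `K.space` that lie only in faces having `v` as a
vertex. -/
def openStar (K : SimplicialComplex ℝ E) (v : E) : Set E :=
  {x ∈ K.space | ∀ s ∈ K.faces, x ∈ convexHull ℝ (s : Set E) → v ∈ s}

theorem mem_openStar_self {v : E} (hv : v ∈ K.vertices) : v ∈ openStar K v :=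
  ⟨K.vertices_subset_space hv, fun _ hs ↦ (K.vertex_mem_convexHull_iff hv hs).1⟩

theorem segment_subset_space_of_mem_openStar {v x : E} (hx : x ∈ openStar K v) :
    segment ℝ x v ⊆ K.space := by
  obtain ⟨s, hs, hxs⟩ := K.mem_space_iff.1 hx.1
  exact ((convex_convexHull ℝ _).segment_subset hxs
    (subset_convexHull ℝ _ (hx.2 s hs hxs))).trans (K.convexHull_subset_space hs)

theorem finite_vertices_of_finite_faces (hK : K.faces.Finite) : K.vertices.Finite := by
  rw [K.vertices_eq]
  exact hK.biUnion fun s _ ↦ s.finite_toSet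

variable [TopologicalSpace E] [IsTopologicalAddGroup E] [ContinuousSMul ℝ E]

theorem isCompact_space_of_finite_faces (hK : K.faces.Finite) : IsCompact K.space :=
  hK.isCompact_biUnion fun s _ ↦ s.finite_toSet.isCompact_convexHull ℝ

theorem isClosed_convexJoin_singleton [T2Space E] {A : Set E} (hA : A.Finite) (z : E) :
    IsClosed (convexJoin ℝ A {z}) := by
  rw [convexJoin_singleton_right]
  refine hA.isClosed_biUnion fun v _ ↦ ?_
  rw [← convexHull_pair]
  exact (toFinite _).isClosed_convexHull ℝ

theorem isOpen_preimage_openStar [T2Space E] (hK : K.faces.Finite) (v : E) :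
    IsOpen ((↑) ⁻¹' openStar K v : Set K.space) := by
  have hclosed : IsClosed (⋃ s ∈ {s ∈ K.faces | v ∉ s}, convexHull ℝ (s : Set E)) :=
    (hK.subset (sep_subset _ _)).isClosed_biUnion fun s _ ↦
      s.finite_toSet.isClosed_convexHull ℝ
  convert hclosed.isOpen_compl.preimage continuous_subtype_val using 1
  ext x
  simp only [openStar, mem_preimage, mem_ofPred_eq, x.2, true_and, mem_compl_iff, mem_iUnion,
    exists_prop, not_exists, not_and]
  exact ⟨fun h s hs hxs ↦ hs.2 (h s hs.1 hxs), fun h s hs hxs ↦ by_contra fun hv ↦ h s ⟨hs, hv⟩ hxs⟩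

/-- The homotopy extension property of finitely many vertices, for paths running from the vertices
`p k` straight to `ζ k`. -/
theorem exists_homotopy_extending_segments [T2Space E] {κ : Type*} [Finite κ]
    (hK : K.faces.Finite) {p : κ → E} (ζ : κ → E) (hp : Injective p)
    (hpK : ∀ k, p k ∈ K.vertices) :
    ∃ F : C(I × K.space, E), (∀ x, F (0, x) = x) ∧
      (∀ t k (x : K.space), x = p k → F (t, x) = polyline (x : E) x (ζ k) t) ∧
      ∀ t x, F (t, x) ∈ K.space ∪ ⋃ k, segment ℝ (p k) (ζ k) := by
  have := isCompact_iff_compactSpace.1 (isCompact_space_of_finite_faces hK)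
  cases nonempty_fintype κ
  obtain ⟨β, hβI, hβ₁, hβstar, hβdisj⟩ := exists_disjoint_bumps
    (p := fun k ↦ (⟨p k, K.vertices_subset_space (hpK k)⟩ : K.space))
    (fun k l hkl ↦ hp (congrArg Subtype.val hkl)) (fun k ↦ isOpen_preimage_openStar hK (p k))
    (fun k ↦ mem_openStar_self (hpK k))
  let F : I × K.space → E := fun a ↦
    a.2 + ∑ k, (polyline (a.2 : E) (p k) (ζ k) (a.1 * β k a.2) - a.2)
  have hF : Continuous F := by fun_prop
  have hF_of_zero (t : I) (x : K.space) (hx : ∀ k, β k x = 0) : F (t, x) = x := by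
    simp [F, hx]
  have hF_of_ne (t : I) (x : K.space) (k : κ) (hk : β k x ≠ 0) :
      F (t, x) = polyline (x : E) (p k) (ζ k) (t * β k x) := by
    have hl (l : κ) (hlk : l ≠ k) : β l x = 0 :=
      not_not.1 fun hl ↦ disjoint_left.1 (hβdisj hlk) hl hk
    simp only [F]
    rw [Fintype.sum_eq_single k fun l hlk ↦ by simp [hl l hlk], add_sub_cancel]
  refine ⟨⟨F, hF⟩, fun x ↦ by simp [F], fun t k x hx ↦ ?_, fun t x ↦ ?_⟩
  · have hβx : β k x = 1 := by rw [← hβ₁ k]; exact congrArg _ (Subtype.ext hx)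
    simp [hF_of_ne t x k (by simp [hβx]), hβx, hx]
  · by_cases hx : ∀ k, β k x = 0
    · exact .inl ((hF_of_zero t x hx).symm ▸ x.2 : F (t, x) ∈ K.space)
    · obtain ⟨k, hk⟩ := not_forall.1 hx
      have hmem := polyline_mem (x : E) (p k) (ζ k) (unitInterval.mul_mem t.2 (hβI k x))
      rw [ContinuousMap.coe_mk, hF_of_ne t x k hk]
      exact hmem.imp (fun h ↦ segment_subset_space_of_mem_openStar (hβstar k hk) h)
        fun h ↦ mem_iUnion_of_mem k h

end Complex

section ConeAttachment

/-- `K'` is obtained from `K` by attaching, for each `j`, the graph cone with apex `z j` over the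
nonempty set `V j` of vertices of `K`: the new faces are the apexes and the edges joining `z j` to
`V j`. As a set, this cone is `convexJoin ℝ (V j) {z j}`. That distinct cones are disjoint is
enforced by `K'` being a simplicial complex. -/
structure IsConeAttachment {ι E : Type*} [AddCommGroup E] [Module ℝ E] [DecidableEq E]
    (K K' : SimplicialComplex ℝ E) (V : ι → Set E) (z : ι → E) : Prop where
  subset_vertices : ∀ j, V j ⊆ K.vertices
  disjoint : Pairwise (Disjoint on V)
  nonempty : ∀ j, (V j).Nonempty
  apex_injective : Injective z
  apex_notMem : ∀ j, z j ∉ K.space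
  faces_eq : K'.faces = K.faces ∪ range (fun j ↦ ({z j} : Finset E)) ∪
    {s : Finset E | ∃ j, ∃ v ∈ V j, s = {v, z j}}

namespace IsConeAttachment

variable {ι E : Type*} [AddCommGroup E] [Module ℝ E] [DecidableEq E]
  {K K' : SimplicialComplex ℝ E} {V : ι → Set E} {z : ι → E}

theorem apex_notMem_base (h : IsConeAttachment K K' V z) (i j : ι) : z i ∉ V j :=
  fun hz ↦ h.apex_notMem i (K.vertices_subset_space (h.subset_vertices j hz))

theorem faces_subset (h : IsConeAttachment K K' V z) : K.faces ⊆ K'.faces := by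
  rw [h.faces_eq]
  exact subset_union_left.trans subset_union_left

theorem exists_edge (h : IsConeAttachment K K' V z) {j : ι} {v : E} (hv : v ∈ V j) :
    ∃ e ∈ K'.faces, (e : Set E) = {v, z j} := by
  refine ⟨{v, z j}, ?_, by simp⟩
  rw [h.faces_eq]
  exact .inr ⟨j, v, hv, rfl⟩

theorem space_eq (h : IsConeAttachment K K' V z) :
    K'.space = K.space ∪ ⋃ j, convexJoin ℝ (V j) {z j} := by
  ext y
  simp only [convexJoin_singleton_right, mem_union, mem_iUnion, exists_prop]
  constructor
  · intro hy
    obtain ⟨s, hs, hys⟩ := K'.mem_space_iff.1 hy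
    rw [h.faces_eq] at hs
    rcases hs with (hs | ⟨j, rfl⟩) | ⟨j, v, hv, rfl⟩
    · exact .inl (K.convexHull_subset_space hs hys)
    · obtain ⟨v, hv⟩ := h.nonempty j
      obtain rfl : y = z j := by simpa using hys
      exact .inr ⟨j, v, hv, right_mem_segment ℝ _ _⟩
    · exact .inr ⟨j, v, hv, by simpa [convexHull_pair] using hys⟩
  · rintro (hy | ⟨j, v, hv, hy⟩)
    · obtain ⟨s, hs, hys⟩ := K.mem_space_iff.1 hy
      exact K'.convexHull_subset_space (h.faces_subset hs) hys
    · obtain ⟨e, he, hev⟩ := h.exists_edge hv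
      rw [← convexHull_pair, ← hev] at hy
      exact K'.convexHull_subset_space he hy

theorem space_subset (h : IsConeAttachment K K' V z) : K.space ⊆ K'.space :=
  h.space_eq ▸ subset_union_left

theorem convexJoin_subset (h : IsConeAttachment K K' V z) (j : ι) :
    convexJoin ℝ (V j) {z j} ⊆ K'.space :=
  h.space_eq ▸ subset_union_of_subset_right
    (subset_iUnion (fun j ↦ convexJoin ℝ (V j) {z j}) j) _

theorem space_inter_convexJoin (h : IsConeAttachment K K' V z) (j : ι) :
    K.space ∩ convexJoin ℝ (V j) {z j} = V j := by
  refine Subset.antisymm ?_ (subset_inter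
    ((h.subset_vertices j).trans K.vertices_subset_space)
    (subset_convexJoin_left (singleton_nonempty _)))
  rintro y ⟨hyK, hyS⟩
  rw [convexJoin_singleton_right, mem_iUnion₂] at hyS
  obtain ⟨v, hv, hyv⟩ := hyS
  obtain ⟨s, hs, hys⟩ := K.mem_space_iff.1 hyK
  obtain ⟨e, he, hev⟩ := h.exists_edge hv
  have hinter : (e ∩ s : Set E) ⊆ {v} := by
    rw [hev]
    rintro w ⟨rfl | rfl, hws⟩
    · rfl
    · exact absurd (K.subset_space hs hws) (h.apex_notMem j)
  have hy : y ∈ convexHull ℝ (e ∩ s : Set E) :=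
    K'.inter_subset_convexHull he (h.faces_subset hs) ⟨by rwa [hev, convexHull_pair], hys⟩
  obtain rfl : y = v := by simpa using convexHull_mono hinter hy
  exact hv

theorem mem_range_inclusion_or_mem_convexJoin (h : IsConeAttachment K K' V z) (y : K'.space) :
    y ∈ range (inclusion h.space_subset) ∨ ∃ j, ↑y ∈ convexJoin ℝ (V j) {z j} := by
  rw [range_inclusion]
  exact (h.space_eq.subset y.2).imp_right mem_iUnion.1

theorem inclusion_preimage_convexJoin (h : IsConeAttachment K K' V z) (j : ι) :
    inclusion h.space_subset ⁻¹' ((↑) ⁻¹' convexJoin ℝ (V j) {z j}) = (↑) ⁻¹' V j := by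
  ext x
  exact ⟨fun hx ↦ h.space_inter_convexJoin j ▸ ⟨x.2, hx⟩,
    fun hx ↦ subset_convexJoin_left (singleton_nonempty _) hx⟩

theorem disjoint_convexJoin (h : IsConeAttachment K K' V z) :
    Pairwise (Disjoint on fun j ↦ convexJoin ℝ (V j) {z j}) := by
  intro i j hij
  simp only [Function.onFun, disjoint_left, convexJoin_singleton_right, mem_iUnion₂]
  rintro y ⟨v, hv, hyv⟩ ⟨w, hw, hyw⟩
  obtain ⟨e, he, hev⟩ := h.exists_edge hv
  obtain ⟨e', he', hew⟩ := h.exists_edge hw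
  have hy : y ∈ convexHull ℝ (e ∩ e' : Set E) := K'.inter_subset_convexHull he he'
    ⟨by rwa [hev, convexHull_pair], by rwa [hew, convexHull_pair]⟩
  obtain ⟨u, hu, hu'⟩ := convexHull_nonempty_iff.1 ⟨y, hy⟩
  rw [hev] at hu
  rw [hew] at hu'
  rcases hu with rfl | rfl <;> rcases hu' with rfl | hu'
  · exact disjoint_left.1 (h.disjoint hij) hv hw
  · exact h.apex_notMem_base j i (hu' ▸ hv)
  · exact h.apex_notMem_base _ _ hw
  · exact hij (h.apex_injective hu')

theorem finite_base (h : IsConeAttachment K K' V z) (hK : K.faces.Finite) (j : ι) :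
    (V j).Finite :=
  (finite_vertices_of_finite_faces hK).subset (h.subset_vertices j)

theorem finite_index (h : IsConeAttachment K K' V z) (hK : K.faces.Finite) : Finite ι := by
  choose v hv using h.nonempty
  have := (finite_vertices_of_finite_faces hK).to_subtype
  refine Finite.of_injective (fun j ↦ (⟨v j, h.subset_vertices j (hv j)⟩ : K.vertices))
    fun i j hij ↦ h.disjoint.eq (not_disjoint_iff.2 ⟨v i, hv i, ?_⟩)
  rw [Subtype.mk.inj hij]
  exact hv j

variable [TopologicalSpace E] [IsTopologicalAddGroup E] [ContinuousSMul ℝ E] [T2Space E]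

theorem exists_homotopy_pulling_base_to_apex (h : IsConeAttachment K K' V z) (hK : K.faces.Finite) :
    ∃ F : C(I × K.space, E), (∀ x, F (0, x) = x) ∧
      (∀ t j (x : K.space), ↑x ∈ V j → F (t, x) = polyline (x : E) x (z j) t) ∧
      ∀ t x, F (t, x) ∈ K'.space := by
  have := h.finite_index hK
  have (j : ι) : Finite (V j) := (h.finite_base hK j).to_subtype
  have hinj : Injective fun k : Σ j, V j ↦ (k.2 : E) := by
    rintro ⟨i, v, hv⟩ ⟨j, w, hw⟩ (rfl : v = w)
    obtain rfl := h.disjoint.eq (not_disjoint_iff.2 ⟨v, hv, hw⟩)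
    rfl
  obtain ⟨F, hF₀, hFV, hFmem⟩ := exists_homotopy_extending_segments (κ := Σ j, V j) hK
    (fun k ↦ z k.1) hinj (fun k ↦ h.subset_vertices k.1 k.2.2)
  refine ⟨F, hF₀, fun t j x hx ↦ hFV t ⟨j, x, hx⟩ x rfl, fun t x ↦ ?_⟩
  rcases hFmem t x with hx | hx
  · exact h.space_subset hx
  · obtain ⟨⟨j, v⟩, hv⟩ := mem_iUnion.1 hx
    exact h.convexJoin_subset j (segment_subset_convexJoin v.2 (mem_singleton (z j)) hv)

theorem isClosedEmbedding_inclusion (h : IsConeAttachment K K' V z) (hK : K.faces.Finite) :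
    IsClosedEmbedding (inclusion h.space_subset) :=
  .inclusion h.space_subset
    ((isCompact_space_of_finite_faces hK).isClosed.preimage continuous_subtype_val)

theorem isClosed_convexJoin (h : IsConeAttachment K K' V z) (hK : K.faces.Finite) (j : ι) :
    IsClosed (convexJoin ℝ (V j) {z j}) :=
  isClosed_convexJoin_singleton (h.finite_base hK j) (z j)

theorem exists_homotopy_collapsing_cones (h : IsConeAttachment K K' V z) (hK : K.faces.Finite) :
    ∃ (f : C(K'.space, K'.space)) (H : (ContinuousMap.id K'.space).Homotopy f),
      ∀ j (y : K'.space), ↑y ∈ convexJoin ℝ (V j) {z j} →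
        (∀ t, ↑(H (t, y)) ∈ convexJoin ℝ (V j) {z j}) ∧ (f y : E) = z j := by
  have := h.finite_index hK
  obtain ⟨F, hF₀, hFV, hFmem⟩ := h.exists_homotopy_pulling_base_to_apex hK
  let i : I × K.space → I × K'.space := Prod.map id (inclusion h.space_subset)
  let S : ι → Set (I × K'.space) := fun j ↦ {a | ↑a.2 ∈ convexJoin ℝ (V j) {z j}}
  have hcov (a : I × K'.space) : a ∈ range i ∨ ∃ j, a ∈ S j :=
    (h.mem_range_inclusion_or_mem_convexJoin a.2).imp_left fun ⟨x, hx⟩ ↦ ⟨(a.1, x), by simp [i, hx]⟩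
  obtain ⟨G, hGF, hGS⟩ := exists_continuousMap_glue (i := i) (S := S) (f := F)
    (g := fun j a ↦ polyline (a.2 : E) a.2 (z j) a.1)
    (.prodMap .id (h.isClosedEmbedding_inclusion hK))
    (fun j ↦ (h.isClosed_convexJoin hK j).preimage (by fun_prop))
    (fun i j hij ↦ (h.disjoint_convexJoin hij).preimage fun a : I × K'.space ↦ (a.2 : E))
    hcov F.continuous (fun j ↦ Continuous.continuousOn (by fun_prop))
    (fun j a ha ↦ hFV a.1 j a.2 ((h.inclusion_preimage_convexJoin j).subset ha))
  have hGmem (j : ι) (a : I × K'.space) (ha : a ∈ S j) : G a ∈ convexJoin ℝ (V j) {z j} :=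
    hGS j ha ▸ polyline_mem_convexJoin ha a.1.2
  have hG (a : I × K'.space) : G a ∈ K'.space := by
    rcases hcov a with ⟨b, rfl⟩ | ⟨j, hj⟩
    · exact hGF b ▸ hFmem b.1 b.2
    · exact h.convexJoin_subset j (hGmem j a hj)
  have hG₀ (y : K'.space) : G (0, y) = y := by
    rcases h.mem_range_inclusion_or_mem_convexJoin y with ⟨x, rfl⟩ | ⟨j, hj⟩
    · exact (hGF (0, x)).trans (hF₀ x)
    · exact (hGS j (x := (0, y)) hj).trans (polyline_zero _ _ _)
  let H : C(I × K'.space, K'.space) := ⟨fun a ↦ ⟨G a, hG a⟩, by fun_prop⟩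
  refine ⟨H.comp (.prodMk (.const _ 1) (.id _)), ⟨H, fun y ↦ Subtype.ext (hG₀ y), fun _ ↦ rfl⟩,
    fun j y hy ↦ ⟨fun t ↦ hGmem j (t, y) hy, ?_⟩⟩
  exact (hGS j (x := (1, y)) hy).trans (polyline_one _ _ _)

end IsConeAttachment

theorem quotient_homotopyEquiv_cone_general {ι E : Type*} [AddCommGroup E] [Module ℝ E]
    [DecidableEq E] [TopologicalSpace E] [IsTopologicalAddGroup E] [ContinuousSMul ℝ E] [T2Space E]
    {K K' : SimplicialComplex ℝ E} {V : ι → Set E} {z : ι → E}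
    (h : IsConeAttachment K K' V z) (hK : K.faces.Finite) :
    Nonempty (Quot (collapseRel fun j ↦ ((↑) ⁻¹' V j : Set K.space)) ≃ₕ K'.space) := by
  have := h.finite_index hK
  let S : ι → Set K'.space := fun j ↦ (↑) ⁻¹' convexJoin ℝ (V j) {z j}
  have hne (j : ι) : ((↑) ⁻¹' V j : Set K.space).Nonempty := by
    obtain ⟨v, hv⟩ := h.nonempty j
    exact ⟨⟨v, K.vertices_subset_space (h.subset_vertices j hv)⟩, hv⟩
  obtain ⟨e⟩ := nonempty_homeomorph_quot_collapseRel (S := S) (h.isClosedEmbedding_inclusion hK)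
    (fun j ↦ (h.isClosed_convexJoin hK j).preimage continuous_subtype_val)
    (fun i j hij ↦ (h.disjoint_convexJoin hij).preimage _)
    h.mem_range_inclusion_or_mem_convexJoin h.inclusion_preimage_convexJoin hne
  obtain ⟨f, H, hH⟩ := h.exists_homotopy_collapsing_cones hK
  obtain ⟨e'⟩ := nonempty_homotopyEquiv_quot_of_homotopy (r := collapseRel S) H
    (fun t a b ⟨j, ha, hb⟩ ↦ ⟨j, (hH j a ha).1 t, (hH j b hb).1 t⟩)
    (fun a b ⟨j, ha, hb⟩ ↦ Subtype.ext ((hH j a ha).2.trans (hH j b hb).2.symm))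
  exact ⟨e.toHomotopyEquiv.trans e'⟩

end ConeAttachment

open scoped Classical in
/-- let `K` be a finite simplicial complex with vertex set partitioned as
`V = ⊔_j V_j`, let `𝒦̄` be the quotient of its realization `𝒦 = K.space` collapsing each
`V j` to a point, and let `K'` (the complex `𝒦̃ = 𝒦 ∪ S`) be obtained from `K` by attaching,
for each `j`, a cone point `z j` joined by edges to all points of `V j` (the cones being
pairwise disjoint and meeting `𝒦` only in `V j`, as enforced by `K'` being a simplicial
complex on new vertices `z j`). Then `𝒦̄` and `𝒦̃` are homotopy equivalent. -/
theorem quotient_homotopyEquiv_cone {m k : ℕ}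
    (K K' : Geometry.SimplicialComplex ℝ (EuclideanSpace ℝ (Fin m)))
    (hfin : K.faces.Finite)
    (V : Fin k → Set (EuclideanSpace ℝ (Fin m)))
    (hpart : K.vertices = ⋃ j, V j)
    (hdisj : Pairwise (Function.onFun Disjoint V))
    (hVne : ∀ j, (V j).Nonempty)
    (z : Fin k → EuclideanSpace ℝ (Fin m))
    (hzinj : Function.Injective z) (hznew : ∀ j, z j ∉ K.space)
    (hfaces : K'.faces = K.faces ∪ Set.range (fun j => ({z j} : Finset (EuclideanSpace ℝ (Fin m))))
      ∪ {s : Finset (EuclideanSpace ℝ (Fin m)) | ∃ j, ∃ v ∈ V j, s = {v, z j}}) :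
    Nonempty (ContinuousMap.HomotopyEquiv
      (Quot (fun a b : K.space => ∃ j, (a : EuclideanSpace ℝ (Fin m)) ∈ V j ∧
        (b : EuclideanSpace ℝ (Fin m)) ∈ V j))
      K'.space) :=
  quotient_homotopyEquiv_cone_general
    ⟨fun j ↦ hpart ▸ subset_iUnion V j, hdisj, hVne, hzinj, hznew, hfaces⟩ hfin
end
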